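/- Suppose 0 < ε < ε₀, f ∈ 𝔚_{ε₀}, and ∫_{−∞}^u f'''(t)e^{t/ε}dt ≤ 0 for every u ∈ ℝ. Then for every x = (x₁,x₂) ∈ Ω_ε, B_ε(x; f) = m_R(u)·(x₁ − u) + f(u), where u = u_R(x) = x₁ + ε − √(ε² − (x₂ − x₁²)) and m_R(u) = ε⁻¹e^{−u/ε}∫_{−∞}^u f'(t)e^{t/ε}dt. -/

import Mathlib

open MeasureTheory Set Real

/-- The average of `φ` over the interval with endpoints `a`, `b`. -/
noncomputable def intAvg (φ : ℝ → ℝ) (a b : ℝ) : ℝ := (∫ t in a..b, φ t) / (b - a)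

/-- `φ` belongs to the ball of radius `ε` of (quadratic-norm) BMO on the interval `(l, r)`. -/
def memBMOe (ε l r : ℝ) (φ : ℝ → ℝ) : Prop :=
  IntegrableOn φ (Ioo l r) ∧
  IntegrableOn (fun t => (φ t) ^ 2) (Ioo l r) ∧
  ∀ c d : ℝ, l ≤ c → c < d → d ≤ r →
    intAvg (fun t => (φ t) ^ 2) c d - (intAvg φ c d) ^ 2 ≤ ε ^ 2

/-- The Bellman function, computed with the interval `I = (0,1)`. -/
noncomputable def bellmanFn (ε : ℝ) (f : ℝ → ℝ) (x₁ x₂ : ℝ) : ℝ :=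
  sSup {y | ∃ φ : ℝ → ℝ, memBMOe ε 0 1 φ ∧
    IntegrableOn (fun t => f (φ t)) (Ioo 0 1) ∧
    intAvg φ 0 1 = x₁ ∧ intAvg (fun t => (φ t) ^ 2) 0 1 = x₂ ∧
    y = intAvg (fun t => f (φ t)) 0 1}

/-- The parabolic strip `Ω_ε`. -/
def parabStrip (ε : ℝ) : Set (ℝ × ℝ) := {x | x.1 ^ 2 ≤ x.2 ∧ x.2 ≤ x.1 ^ 2 + ε ^ 2}

/-- The parameter of the right tangent through `x`. -/
noncomputable def uRpt (ε : ℝ) (x : ℝ × ℝ) : ℝ :=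
  x.1 + ε - Real.sqrt (ε ^ 2 - (x.2 - x.1 ^ 2))

/-- The class `𝔚_{ε₀}`. -/
def memWcl (ε₀ : ℝ) (f f3 : ℝ → ℝ) : Prop :=
  ContDiff ℝ 2 f ∧
  (∀ x y : ℝ, x ≤ y → deriv (deriv f) y - deriv (deriv f) x = ∫ t in x..y, f3 t) ∧
  Integrable (fun t => f t * Real.exp (-|t| / ε₀)) ∧
  Integrable (fun t => deriv f t * Real.exp (-|t| / ε₀)) ∧
  Integrable (fun t => deriv (deriv f) t * Real.exp (-|t| / ε₀)) ∧
  Integrable (fun t => f3 t * Real.exp (-|t| / ε₀))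

/-!
Put `m = expAvg ε f''`, so that `f'' = m + ε m'` with `m' = expAvg ε f''' ≤ 0`, and let `q_u` be the
parabola touching `f` at `u` with second derivative `m u`. Differentiating in `u` gives
`q_u(t) - f(t) = ∫_{-∞}^u m'(s) ρ(s - t) / 2 ds` for `t ≤ u` and `f(t) ≤ q_u(t)` for `t ≥ u`, where
`ρ(y) = y₊² - 2εy₊`. For the upper bound it therefore suffices that `∫ ρ(ψ) ≤ 0` whenever
`ψ = s - φ` has `BMO` norm at most `ε` and mean at most `ε`. The rising sun lemma for the primitive
of `ψ - ε` cuts the interval into pieces where the mean of `ψ` is exactly `ε`, so that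
`⟨ρ(ψ)⟩ ≤ ⟨ψ²⟩ - 2ε⟨ψ⟩ ≤ 0` by the bound on the variance, and a remainder where `ψ ≤ ε` almost
everywhere and `ρ(ψ) ≤ 0`.

The bound is attained by `u + ε min(log(t / a), 0)` with `a = (u - x₁) / ε`: it is a Lipschitz
function of the logarithm, whose variance on every interval is at most `1`, and averages along it
are exponential averages of the outer function.
-/

open scoped NNReal ENNReal

section IntervalAverages

lemma memLp_comp_of_lipschitzWith {α E F : Type*} [MeasurableSpace α] {μ : Measure α}
    [IsFiniteMeasure μ] [NormedAddCommGroup E] [NormedAddCommGroup F] {p : ℝ≥0∞} {K : ℝ≥0}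
    {g : E → F} {φ : α → E} (hg : LipschitzWith K g) (hφ : MemLp φ p μ) :
    MemLp (fun t => g (φ t)) p μ := by
  have hshift : LipschitzWith K fun y => g y - g 0 := by
    simpa using hg.sub (LipschitzWith.const (g 0))
  convert (hshift.comp_memLp (sub_self _) hφ).add (memLp_const (g 0)) using 1
  ext t
  simp

variable {φ : ℝ → ℝ} {c d : ℝ}

lemma intervalIntegrable_of_memLp_two (hcd : c ≤ d)
    (hφ : MemLp φ 2 (volume.restrict (Ioo c d))) : IntervalIntegrable φ volume c d :=
  (intervalIntegrable_iff_integrableOn_Ioo_of_le hcd).2 (hφ.integrable one_le_two)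

lemma intervalIntegrable_sq_of_memLp_two (hcd : c ≤ d)
    (hφ : MemLp φ 2 (volume.restrict (Ioo c d))) :
    IntervalIntegrable (fun t => φ t ^ 2) volume c d :=
  (intervalIntegrable_iff_integrableOn_Ioo_of_le hcd).2 hφ.integrable_sq

lemma intAvg_mono {ψ : ℝ → ℝ} (hcd : c ≤ d) (hφ : IntervalIntegrable φ volume c d)
    (hψ : IntervalIntegrable ψ volume c d) (h : ∀ t, φ t ≤ ψ t) :
    intAvg φ c d ≤ intAvg ψ c d :=
  div_le_div_of_nonneg_right (intervalIntegral.integral_mono hcd hφ hψ h) (sub_nonneg.2 hcd)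

lemma intAvg_quadratic (hcd : c < d) (hφ : MemLp φ 2 (volume.restrict (Ioo c d)))
    (k₀ k₁ k₂ : ℝ) :
    intAvg (fun t => k₀ + k₁ * φ t + k₂ * φ t ^ 2) c d =
      k₀ + k₁ * intAvg φ c d + k₂ * intAvg (fun t => φ t ^ 2) c d := by
  have hlen : d - c ≠ 0 := sub_ne_zero.2 hcd.ne'
  have hconst : IntervalIntegrable (fun _ => k₀) volume c d := intervalIntegrable_const
  have hlin := (intervalIntegrable_of_memLp_two hcd.le hφ).const_mul k₁
  have hsq := (intervalIntegrable_sq_of_memLp_two hcd.le hφ).const_mul k₂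
  unfold intAvg
  rw [intervalIntegral.integral_add (hconst.add hlin) hsq,
    intervalIntegral.integral_add hconst hlin, intervalIntegral.integral_const,
    intervalIntegral.integral_const_mul, intervalIntegral.integral_const_mul, smul_eq_mul]
  field_simp

lemma intAvg_sub_sq (hcd : c < d) (hφ : MemLp φ 2 (volume.restrict (Ioo c d))) (m : ℝ) :
    intAvg (fun t => (φ t - m) ^ 2) c d =
      intAvg (fun t => φ t ^ 2) c d - intAvg φ c d ^ 2 + (intAvg φ c d - m) ^ 2 := by
  have hexpand : (fun t => (φ t - m) ^ 2) =
      fun t => m ^ 2 + (-2 * m) * φ t + 1 * φ t ^ 2 := by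
    funext t; ring
  rw [hexpand, intAvg_quadratic hcd hφ]
  ring

lemma variance_comp_le_of_lipschitzWith (hcd : c < d)
    (hφ : MemLp φ 2 (volume.restrict (Ioo c d))) {K : ℝ≥0} {g : ℝ → ℝ} (hg : LipschitzWith K g) :
    intAvg (fun t => g (φ t) ^ 2) c d - intAvg (fun t => g (φ t)) c d ^ 2 ≤
      K ^ 2 * (intAvg (fun t => φ t ^ 2) c d - intAvg φ c d ^ 2) := by
  set μ := intAvg φ c d
  have hgφ := memLp_comp_of_lipschitzWith hg hφ
  have hpt : ∀ t, (g (φ t) - g μ) ^ 2 ≤ K ^ 2 * (φ t - μ) ^ 2 := fun t => by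
    rw [← mul_pow, sq_le_sq, abs_mul, NNReal.abs_eq]
    exact hg.dist_le_mul (φ t) μ
  calc intAvg (fun t => g (φ t) ^ 2) c d - intAvg (fun t => g (φ t)) c d ^ 2
      ≤ intAvg (fun t => (g (φ t) - g μ) ^ 2) c d := by
        rw [intAvg_sub_sq hcd hgφ]
        exact le_add_of_nonneg_right (sq_nonneg _)
    _ ≤ intAvg (fun t => K ^ 2 * (φ t - μ) ^ 2) c d :=
        intAvg_mono hcd.le
          (intervalIntegrable_sq_of_memLp_two hcd.le (hgφ.sub (memLp_const (g μ))))
          ((intervalIntegrable_sq_of_memLp_two hcd.le (hφ.sub (memLp_const μ))).const_mul _) hpt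
    _ = K ^ 2 * (intAvg (fun t => φ t ^ 2) c d - μ ^ 2) := by
        rw [intAvg, intervalIntegral.integral_const_mul, mul_div_assoc, ← intAvg,
          intAvg_sub_sq hcd hφ, sub_self, zero_pow two_ne_zero, add_zero]

end IntervalAverages

namespace memBMOe

variable {ε l r c d : ℝ} {φ : ℝ → ℝ}

lemma memLp_two (h : memBMOe ε l r φ) : MemLp φ 2 (volume.restrict (Ioo l r)) :=
  (memLp_two_iff_integrable_sq h.1.1).2 h.2.1

lemma mono_interval (h : memBMOe ε l r φ) (hc : l ≤ c) (hd : d ≤ r) : memBMOe ε c d φ :=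
  ⟨h.1.mono_set (Ioo_subset_Ioo hc hd), h.2.1.mono_set (Ioo_subset_Ioo hc hd),
    fun c' d' hc' hcd' hd' => h.2.2 c' d' (hc.trans hc') hcd' (hd'.trans hd)⟩

lemma intervalIntegrable (h : memBMOe ε l r φ) (hlr : l ≤ r) : IntervalIntegrable φ volume l r :=
  intervalIntegrable_of_memLp_two hlr h.memLp_two

lemma intervalIntegrable_sq (h : memBMOe ε l r φ) (hlr : l ≤ r) :
    IntervalIntegrable (fun t => φ t ^ 2) volume l r :=
  intervalIntegrable_sq_of_memLp_two hlr h.memLp_two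

lemma comp_lipschitzWith (h : memBMOe ε l r φ) {K : ℝ≥0} {g : ℝ → ℝ} (hg : LipschitzWith K g) :
    memBMOe (K * ε) l r (fun t => g (φ t)) := by
  have hgφ := memLp_comp_of_lipschitzWith hg h.memLp_two
  refine ⟨hgφ.integrable one_le_two, hgφ.integrable_sq, fun c d hc hcd hd => ?_⟩
  calc _ ≤ K ^ 2 * (intAvg (fun t => φ t ^ 2) c d - intAvg φ c d ^ 2) :=
        variance_comp_le_of_lipschitzWith hcd (h.mono_interval hc hd).memLp_two hg
    _ ≤ (K * ε) ^ 2 := by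
        rw [mul_pow]
        exact mul_le_mul_of_nonneg_left (h.2.2 c d hc hcd hd) (sq_nonneg _)

end memBMOe

section OpenSetsOfReals

lemma closure_connectedComponentIn_inter_subset {X : Type*} [TopologicalSpace X] {U : Set X}
    {x : X} (hx : x ∈ U) :
    closure (connectedComponentIn U x) ∩ U ⊆ connectedComponentIn U x := by
  rintro y ⟨hy, hyU⟩
  have hconn : IsPreconnected (insert y (connectedComponentIn U x)) :=
    isPreconnected_connectedComponentIn.subset_closure (subset_insert _ _)
      (insert_subset hy subset_closure)
  exact hconn.subset_connectedComponentIn (mem_insert_of_mem _ (mem_connectedComponentIn hx))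
    (insert_subset hyU (connectedComponentIn_subset U x)) (mem_insert _ _)

lemma exists_connectedComponentIn_eq_Ioo {U : Set ℝ} (hU : IsOpen U) (hbelow : BddBelow U)
    (habove : BddAbove U) {x : ℝ} (hx : x ∈ U) :
    ∃ a b, a < b ∧ a ∉ U ∧ b ∉ U ∧ connectedComponentIn U x = Ioo a b := by
  set s := connectedComponentIn U x
  have hsU : s ⊆ U := connectedComponentIn_subset U x
  have hxs : x ∈ s := mem_connectedComponentIn hx
  have hopen : IsOpen s := hU.connectedComponentIn
  have hconn : IsConnected s := isConnected_connectedComponentIn_iff.2 hx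
  have hs_below : BddBelow s := hbelow.mono hsU
  have hs_above : BddAbove s := habove.mono hsU
  have hs_subset : s ⊆ Ioo (sInf s) (sSup s) := by
    have := hopen.subset_interior_iff.2 (subset_Icc_csInf_csSup hs_below hs_above)
    rwa [interior_Icc] at this
  have hs_eq : s = Ioo (sInf s) (sSup s) :=
    hs_subset.antisymm (hconn.Ioo_csInf_csSup_subset hs_below hs_above)
  refine ⟨sInf s, sSup s, (hs_subset hxs).1.trans (hs_subset hxs).2, fun hmem => ?_,
    fun hmem => ?_, hs_eq⟩
  · exact lt_irrefl _ (hs_subset (closure_connectedComponentIn_inter_subset hx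
      ⟨csInf_mem_closure ⟨x, hxs⟩ hs_below, hmem⟩)).1
  · exact lt_irrefl _ (hs_subset (closure_connectedComponentIn_inter_subset hx
      ⟨csSup_mem_closure ⟨x, hxs⟩ hs_above, hmem⟩)).2

lemma pairwiseDisjoint_connectedComponentIn {X : Type*} [TopologicalSpace X] (U : Set X) :
    (connectedComponentIn U '' U).PairwiseDisjoint id := by
  rintro _ ⟨x, _, rfl⟩ _ ⟨y, _, rfl⟩ hne
  refine disjoint_left.2 fun z hzx hzy => hne ?_
  exact (connectedComponentIn_eq hzx).trans (connectedComponentIn_eq hzy).symm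

lemma setIntegral_nonpos_of_forall_component {U : Set ℝ} (hU : IsOpen U) (hbelow : BddBelow U)
    (habove : BddAbove U) {g : ℝ → ℝ} (hg : IntegrableOn g U)
    (hcomp : ∀ a b, a < b → Ioo a b ⊆ U → a ∉ U → b ∉ U → ∫ t in Ioo a b, g t ≤ 0) :
    ∫ t in U, g t ≤ 0 := by
  set C : Set (Set ℝ) := connectedComponentIn U '' U
  have hopen : ∀ s ∈ C, IsOpen s := by
    rintro _ ⟨x, _, rfl⟩
    exact hU.connectedComponentIn
  have hnonempty : ∀ s ∈ C, s.Nonempty := by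
    rintro _ ⟨x, hx, rfl⟩
    exact ⟨x, mem_connectedComponentIn hx⟩
  have hdisj : C.PairwiseDisjoint id := pairwiseDisjoint_connectedComponentIn U
  have hU_eq : U = ⋃ s ∈ C, s := by
    refine Subset.antisymm (fun z hz => mem_biUnion ⟨z, hz, rfl⟩ (mem_connectedComponentIn hz)) ?_
    rintro z hz
    obtain ⟨_, ⟨x, _, rfl⟩, hzx⟩ := mem_iUnion₂.1 hz
    exact connectedComponentIn_subset U x hzx
  have : Countable C := hdisj.countable_of_isOpen hopen hnonempty
  rw [biUnion_eq_iUnion] at hU_eq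
  rw [hU_eq, integral_iUnion (s := fun s : C => (s : Set ℝ)) (fun s => (hopen s s.2).measurableSet)
    (fun s t hst => hdisj s.2 t.2 (Subtype.coe_ne_coe.2 hst)) (hU_eq ▸ hg)]
  refine tsum_nonpos ?_
  rintro ⟨_, x, hx, rfl⟩
  obtain ⟨a, b, hab, ha, hb, heq⟩ := exists_connectedComponentIn_eq_Ioo hU hbelow habove hx
  simp only [heq]
  exact hcomp a b hab (heq ▸ connectedComponentIn_subset U x) ha hb

end OpenSetsOfReals

section RisingSun

/-- The shadow set of F. Riesz's rising sun lemma: the points of `(l, r)` at which the value of `Φ`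
exceeds some value of `Φ` further to the left. -/
def shadowSet (Φ : ℝ → ℝ) (l r : ℝ) : Set ℝ := {t ∈ Ioo l r | ∃ y ∈ Ico l t, Φ y < Φ t}

variable {Φ : ℝ → ℝ} {l r a b : ℝ}

lemma shadowSet_subset_Ioo : shadowSet Φ l r ⊆ Ioo l r := fun _ ht => ht.1

lemma isOpen_shadowSet (hΦ : ContinuousOn Φ (Icc l r)) : IsOpen (shadowSet Φ l r) := by
  rw [isOpen_iff_mem_nhds]
  rintro t ⟨ht, y, hy, hlt⟩
  have hΦt : ContinuousAt Φ t := hΦ.continuousAt (Icc_mem_nhds ht.1 ht.2)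
  filter_upwards [Ioo_mem_nhds ht.1 ht.2, hΦt.eventually (lt_mem_nhds hlt), lt_mem_nhds hy.2]
    with z hz hΦz hyz
  exact ⟨hz, y, ⟨hy.1, hyz⟩, hΦz⟩

lemma le_of_notMem_shadowSet (har : a < r) (ha : a ∉ shadowSet Φ l r) {y : ℝ} (hy : y ∈ Icc l a) :
    Φ a ≤ Φ y := by
  by_contra! hlt
  have hya : y < a := hy.2.lt_of_ne (by rintro rfl; exact lt_irrefl _ hlt)
  exact ha ⟨⟨hy.1.trans_lt hya, har⟩, y, ⟨hy.1, hya⟩, hlt⟩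

lemma left_le_of_Ioo_subset_shadowSet (hΦ : ContinuousOn Φ (Icc l r)) (hab : a < b)
    (hsub : Ioo a b ⊆ shadowSet Φ l r) (ha : a ∉ shadowSet Φ l r) {t : ℝ} (ht : t ∈ Ioo a b) :
    Φ a ≤ Φ t := by
  obtain ⟨hla, hbr⟩ := (Ioo_subset_Ioo_iff hab).1 (hsub.trans shadowSet_subset_Ioo)
  have hlt : l ≤ t := hla.trans ht.1.le
  obtain ⟨y, hy, hmin⟩ := isCompact_Icc.exists_isMinOn (nonempty_Icc.2 hlt)
    (hΦ.mono (Icc_subset_Icc_right (ht.2.le.trans hbr)))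
  have hya : y ≤ a := by
    by_contra! hay
    obtain ⟨_, z, hz, hΦz⟩ := hsub ⟨hay, hy.2.trans_lt ht.2⟩
    exact hΦz.not_ge (hmin ⟨hz.1, hz.2.le.trans hy.2⟩)
  exact (le_of_notMem_shadowSet (hab.trans_le hbr) ha ⟨hy.1, hya⟩).trans
    (hmin (right_mem_Icc.2 hlt))

lemma eq_of_component_shadowSet (hΦ : ContinuousOn Φ (Icc l r)) (hmin : ∀ t ∈ Icc l r, Φ r ≤ Φ t)
    (hab : a < b) (hsub : Ioo a b ⊆ shadowSet Φ l r) (ha : a ∉ shadowSet Φ l r)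
    (hb : b ∉ shadowSet Φ l r) : Φ a = Φ b := by
  obtain ⟨hla, hbr⟩ := (Ioo_subset_Ioo_iff hab).1 (hsub.trans shadowSet_subset_Ioo)
  refine le_antisymm ?_ ?_
  · have hlim : Filter.Tendsto Φ (nhdsWithin b (Ioo a b)) (nhds (Φ b)) :=
      (hΦ b ⟨hla.trans hab.le, hbr⟩).mono (Ioo_subset_Icc_self.trans (Icc_subset_Icc hla hbr))
    have : (nhdsWithin b (Ioo a b)).NeBot := right_nhdsWithin_Ioo_neBot hab
    exact ge_of_tendsto hlim (eventually_mem_nhdsWithin.mono fun t ht =>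
      left_le_of_Ioo_subset_shadowSet hΦ hab hsub ha ht)
  · rcases hbr.eq_or_lt with rfl | hbr
    · exact hmin a ⟨hla, hab.le⟩
    · exact le_of_notMem_shadowSet hbr hb ⟨hla, hab.le⟩

lemma exists_first_eq_right (hlr : l ≤ r) (hΦ : ContinuousOn Φ (Icc l r)) (hle : Φ r ≤ Φ l) :
    ∃ p ∈ Icc l r, Φ p = Φ r ∧ ∀ t ∈ Icc l p, Φ p ≤ Φ t := by
  have hcompact : IsCompact (Icc l r ∩ Φ ⁻¹' {Φ r}) :=
    isCompact_Icc.of_isClosed_subset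
      (hΦ.preimage_isClosed_of_isClosed isClosed_Icc isClosed_singleton) inter_subset_left
  obtain ⟨p, ⟨hp, hΦp : Φ p = Φ r⟩, hleast⟩ :=
    hcompact.exists_isLeast ⟨r, right_mem_Icc.2 hlr, rfl⟩
  refine ⟨p, hp, hΦp, fun t ht => ?_⟩
  by_contra! hlt
  have htp : t < p := ht.2.lt_of_ne (by rintro rfl; exact lt_irrefl _ hlt)
  obtain ⟨z, hz, hΦz⟩ := intermediate_value_Icc' ht.1
    (hΦ.mono (Icc_subset_Icc_right (ht.2.trans hp.2))) ⟨hlt.le, hΦp.trans_le hle⟩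
  exact (hz.2.trans_lt htp).not_ge
    (hleast ⟨⟨hz.1, hz.2.trans (ht.2.trans hp.2)⟩, hΦz.trans hΦp⟩)

lemma nonpos_of_hasDerivAt_of_notMem_shadowSet {Φ' t : ℝ} (ht : t ∈ Ioo l r)
    (hts : t ∉ shadowSet Φ l r) (hΦ : HasDerivAt Φ Φ' t) : Φ' ≤ 0 := by
  refine le_of_tendsto (hasDerivAt_iff_tendsto_slope_left_right.1 hΦ).1 ?_
  filter_upwards [Ioo_mem_nhdsLT ht.1] with y hy
  rw [slope_def_field]
  exact div_nonpos_of_nonneg_of_nonpos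
    (sub_nonneg.2 (le_of_notMem_shadowSet ht.2 hts ⟨hy.1.le, hy.2.le⟩)) (sub_nonpos.2 hy.2.le)

end RisingSun

section RampQuad

/-- The quadratic `y ^ 2 - 2 * ε * y` cut off to zero on the negative half-line. Its shifts by `s`
generate the test functions in the upper bound for the Bellman function. -/
noncomputable def rampQuad (ε y : ℝ) : ℝ := (max y 0) ^ 2 - 2 * ε * max y 0

variable {ε y : ℝ}

lemma rampQuad_of_nonneg (hy : 0 ≤ y) : rampQuad ε y = y ^ 2 - 2 * ε * y := by
  rw [rampQuad, max_eq_left hy]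

lemma rampQuad_of_nonpos (hy : y ≤ 0) : rampQuad ε y = 0 := by
  simp [rampQuad, max_eq_right hy]

lemma rampQuad_le (hε : 0 ≤ ε) : rampQuad ε y ≤ y ^ 2 - 2 * ε * y := by
  rcases le_total 0 y with hy | hy
  · exact (rampQuad_of_nonneg hy).le
  · rw [rampQuad_of_nonpos hy]
    nlinarith

lemma rampQuad_nonpos (hy : y ≤ 2 * ε) : rampQuad ε y ≤ 0 := by
  rcases le_total 0 y with hy0 | hy0
  · rw [rampQuad_of_nonneg hy0]
    nlinarith
  · exact (rampQuad_of_nonpos hy0).le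

lemma rampQuad_nonneg (hε : 0 ≤ ε) (hy : 2 * ε ≤ y) : 0 ≤ rampQuad ε y := by
  rw [rampQuad_of_nonneg (by linarith)]
  nlinarith

lemma abs_rampQuad_le : |rampQuad ε y| ≤ 2 * y ^ 2 + ε ^ 2 := by
  rcases le_total 0 y with hy | hy
  · rw [rampQuad_of_nonneg hy, abs_le]
    constructor <;> nlinarith [sq_nonneg (y - ε), sq_nonneg (y + ε), sq_nonneg y]
  · rw [rampQuad_of_nonpos hy, abs_zero]
    positivity

lemma continuous_rampQuad : Continuous (rampQuad ε) := by
  unfold rampQuad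
  fun_prop

end RampQuad

namespace memBMOe

variable {ε l r : ℝ} {ψ : ℝ → ℝ}

lemma intervalIntegrable_rampQuad (h : memBMOe ε l r ψ) (hlr : l ≤ r) :
    IntervalIntegrable (fun t => rampQuad ε (ψ t)) volume l r := by
  have hpos := h.comp_lipschitzWith (LipschitzWith.id.max_const 0)
  exact (hpos.intervalIntegrable_sq hlr).sub ((hpos.intervalIntegrable hlr).const_mul (2 * ε))

lemma intervalIntegrable_sub_const (h : memBMOe ε l r ψ) (hlr : l ≤ r) (k : ℝ) :
    IntervalIntegrable (fun t => ψ t - k) volume l r :=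
  (h.intervalIntegrable hlr).sub intervalIntegrable_const

lemma continuousOn_primitive_sub (h : memBMOe ε l r ψ) (hlr : l ≤ r) (k : ℝ) :
    ContinuousOn (fun t => ∫ s in l..t, (ψ s - k)) (Icc l r) := by
  have := intervalIntegral.continuousOn_primitive_interval' (h.intervalIntegrable_sub_const hlr k)
    left_mem_uIcc
  rwa [uIcc_of_le hlr] at this

lemma integral_sub_eq_zero_of_primitive_eq (h : memBMOe ε l r ψ) {k a b : ℝ} (hla : l ≤ a)
    (hab : a ≤ b) (hbr : b ≤ r) (heq : ∫ s in l..a, (ψ s - k) = ∫ s in l..b, (ψ s - k)) :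
    ∫ s in a..b, (ψ s - k) = 0 := by
  rw [← intervalIntegral.integral_interval_sub_left
    ((h.mono_interval le_rfl hbr).intervalIntegrable_sub_const (hla.trans hab) k)
    ((h.mono_interval le_rfl (hab.trans hbr)).intervalIntegrable_sub_const hla k), heq, sub_self]

lemma integral_rampQuad_nonpos_of_mean_eq (h : memBMOe ε l r ψ) (hε : 0 ≤ ε) (hlr : l ≤ r)
    (hmean : ∫ t in l..r, (ψ t - ε) = 0) : ∫ t in l..r, rampQuad ε (ψ t) ≤ 0 := by
  rcases hlr.eq_or_lt with rfl | hlt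
  · simp
  have hψ := h.intervalIntegrable hlr
  have hψ2 := h.intervalIntegrable_sq hlr
  have havg : intAvg ψ l r = ε := by
    rw [intervalIntegral.integral_sub hψ intervalIntegrable_const,
      intervalIntegral.integral_const, smul_eq_mul, sub_eq_zero] at hmean
    rw [intAvg, hmean, mul_div_cancel_left₀ _ (sub_ne_zero.2 hlt.ne')]
  have hquad : intAvg (fun t => ψ t ^ 2 - 2 * ε * ψ t) l r ≤ 0 := by
    have hvar := h.2.2 l r le_rfl hlt le_rfl
    have hexp := intAvg_quadratic hlt h.memLp_two 0 (-2 * ε) 1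
    rw [havg] at hvar hexp
    calc _ = intAvg (fun t => 0 + -2 * ε * ψ t + 1 * ψ t ^ 2) l r := by
          congr! 2
          ring
      _ ≤ 0 := by rw [hexp]; linarith
  calc ∫ t in l..r, rampQuad ε (ψ t) ≤ ∫ t in l..r, (ψ t ^ 2 - 2 * ε * ψ t) :=
        intervalIntegral.integral_mono hlr (h.intervalIntegrable_rampQuad hlr)
          (hψ2.sub (hψ.const_mul _)) fun _ => rampQuad_le hε
    _ ≤ 0 := by simpa using (div_le_iff₀ (sub_pos.2 hlt)).1 hquad

lemma setIntegral_shadowSet_rampQuad_nonpos (h : memBMOe ε l r ψ) (hε : 0 ≤ ε) (hlr : l ≤ r)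
    (hmin : ∀ t ∈ Icc l r, ∫ s in l..r, (ψ s - ε) ≤ ∫ s in l..t, (ψ s - ε)) :
    ∫ t in shadowSet (fun t => ∫ s in l..t, (ψ s - ε)) l r, rampQuad ε (ψ t) ≤ 0 := by
  have hcont := h.continuousOn_primitive_sub hlr ε
  refine setIntegral_nonpos_of_forall_component (isOpen_shadowSet hcont)
    (bddBelow_Ioo.mono shadowSet_subset_Ioo) (bddAbove_Ioo.mono shadowSet_subset_Ioo)
    (((intervalIntegrable_iff_integrableOn_Ioo_of_le hlr).1
      (h.intervalIntegrable_rampQuad hlr)).mono_set shadowSet_subset_Ioo) ?_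
  intro a b hab hsub ha hb
  obtain ⟨hla, hbr⟩ := (Ioo_subset_Ioo_iff hab).1 (hsub.trans shadowSet_subset_Ioo)
  have hzero := h.integral_sub_eq_zero_of_primitive_eq hla hab.le hbr
    (eq_of_component_shadowSet hcont hmin hab hsub ha hb)
  rw [← integral_Ioc_eq_integral_Ioo, ← intervalIntegral.integral_of_le hab.le]
  exact (h.mono_interval hla hbr).integral_rampQuad_nonpos_of_mean_eq hε hab.le hzero

lemma setIntegral_compl_shadowSet_rampQuad_nonpos (h : memBMOe ε l r ψ) (hε : 0 ≤ ε) (hlr : l ≤ r) :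
    ∫ t in Ioo l r \ shadowSet (fun t => ∫ s in l..t, (ψ s - ε)) l r, rampQuad ε (ψ t) ≤ 0 := by
  refine setIntegral_nonpos_ae (measurableSet_Ioo.diff
    (isOpen_shadowSet (h.continuousOn_primitive_sub hlr ε)).measurableSet) ?_
  filter_upwards [(h.intervalIntegrable_sub_const hlr ε).ae_hasDerivAt_integral]
    with t hderiv ⟨ht, hts⟩
  have hle := nonpos_of_hasDerivAt_of_notMem_shadowSet ht hts
    (hderiv (uIcc_of_le hlr ▸ Ioo_subset_Icc_self ht) l left_mem_uIcc)
  exact rampQuad_nonpos (by linarith)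

lemma integral_rampQuad_nonpos_of_primitive_min (h : memBMOe ε l r ψ) (hε : 0 ≤ ε) (hlr : l ≤ r)
    (hmin : ∀ t ∈ Icc l r, ∫ s in l..r, (ψ s - ε) ≤ ∫ s in l..t, (ψ s - ε)) :
    ∫ t in l..r, rampQuad ε (ψ t) ≤ 0 := by
  have hInt := (intervalIntegrable_iff_integrableOn_Ioo_of_le hlr).1
    (h.intervalIntegrable_rampQuad hlr)
  rw [intervalIntegral.integral_of_le hlr, integral_Ioc_eq_integral_Ioo,
    ← integral_inter_add_sdiff
      (isOpen_shadowSet (h.continuousOn_primitive_sub hlr ε)).measurableSet hInt,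
    inter_eq_right.2 shadowSet_subset_Ioo]
  exact add_nonpos (h.setIntegral_shadowSet_rampQuad_nonpos hε hlr hmin)
    (h.setIntegral_compl_shadowSet_rampQuad_nonpos hε hlr)

theorem integral_rampQuad_nonpos (h : memBMOe ε l r ψ) (hε : 0 ≤ ε) (hlr : l ≤ r)
    (hmean : ∫ t in l..r, (ψ t - ε) ≤ 0) : ∫ t in l..r, rampQuad ε (ψ t) ≤ 0 := by
  obtain ⟨p, hp, hpr, hmin⟩ := exists_first_eq_right hlr (h.continuousOn_primitive_sub hlr ε)
    (by simpa using hmean)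
  have hleft := h.mono_interval le_rfl hp.2
  have hright := h.mono_interval hp.1 le_rfl
  rw [← intervalIntegral.integral_add_adjacent_intervals
    (hleft.intervalIntegrable_rampQuad hp.1) (hright.intervalIntegrable_rampQuad hp.2)]
  exact add_nonpos (hleft.integral_rampQuad_nonpos_of_primitive_min hε hp.1 hmin)
    (hright.integral_rampQuad_nonpos_of_mean_eq hε hp.2
      (h.integral_sub_eq_zero_of_primitive_eq hp.1 hp.2 le_rfl hpr))

end memBMOe

section ExpAverages

/-- The average of `g` over `(-∞, u]` with respect to the probability density
`ε⁻¹ * exp ((t - u) / ε)`. The coefficient `m_R` is `expAvg ε f'`. -/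
noncomputable def expAvg (ε : ℝ) (g : ℝ → ℝ) (u : ℝ) : ℝ :=
  ε⁻¹ * exp (-u / ε) * ∫ t in Iic u, g t * exp (t / ε)

variable {ε u : ℝ} {g g' : ℝ → ℝ}

lemma integrableOn_exp_div_Iic (hε : 0 < ε) (u : ℝ) :
    IntegrableOn (fun t => exp (t / ε)) (Iic u) := by
  simpa only [div_eq_inv_mul] using integrableOn_exp_mul_Iic (inv_pos.2 hε) u

lemma integral_exp_div_Iic (hε : 0 < ε) (u : ℝ) :
    ∫ t in Iic u, exp (t / ε) = ε * exp (u / ε) := by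
  simpa only [div_eq_inv_mul, inv_inv] using integral_exp_mul_Iic (inv_pos.2 hε) u

lemma exp_neg_div_mul_exp_div (u ε : ℝ) : exp (-u / ε) * exp (u / ε) = 1 := by
  rw [← exp_add, neg_div, neg_add_cancel, exp_zero]

lemma expAvg_const (hε : 0 < ε) (k u : ℝ) : expAvg ε (fun _ => k) u = k := by
  rw [expAvg, integral_const_mul, integral_exp_div_Iic hε]
  calc _ = k * (ε⁻¹ * ε) * (exp (-u / ε) * exp (u / ε)) := by ring
    _ = k := by rw [inv_mul_cancel₀ hε.ne', exp_neg_div_mul_exp_div, mul_one, mul_one]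

lemma expAvg_sub {h : ℝ → ℝ} (hg : IntegrableOn (fun t => g t * exp (t / ε)) (Iic u))
    (hh : IntegrableOn (fun t => h t * exp (t / ε)) (Iic u)) :
    expAvg ε (fun t => g t - h t) u = expAvg ε g u - expAvg ε h u := by
  simp only [expAvg, sub_mul]
  rw [integral_sub hg hh, mul_sub]

lemma setIntegral_indicator_lt_mul_exp (hε : 0 < ε) (h : ℝ → ℝ) {s : ℝ} (hs : s ≤ u) :
    ∫ t in Iic u, {p : ℝ × ℝ | p.1 < p.2}.indicator (fun p => h p.2 * exp (p.1 / ε)) (t, s) =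
      ε * (h s * exp (s / ε)) := by
  change ∫ t in Iic u, (Iio s).indicator (fun t => h s * exp (t / ε)) t = _
  rw [setIntegral_indicator measurableSet_Iio,
    inter_eq_right.2 (Iio_subset_Iic_self.trans (Iic_subset_Iic.2 hs)),
    ← integral_Iic_eq_integral_Iio, integral_const_mul, integral_exp_div_Iic hε, mul_left_comm]

lemma integrable_indicator_lt_mul_exp (hε : 0 < ε)
    (hg' : IntegrableOn (fun t => g' t * exp (t / ε)) (Iic u)) :
    Integrable ({p : ℝ × ℝ | p.1 < p.2}.indicator fun p => g' p.2 * exp (p.1 / ε))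
      ((volume.restrict (Iic u)).prod (volume.restrict (Iic u))) := by
  have hmeas_g' : AEStronglyMeasurable g' (volume.restrict (Iic u)) := by
    refine (hg'.1.mul (g := fun t => exp (-t / ε)) (by fun_prop)).congr (.of_forall fun t => ?_)
    simp only [Pi.mul_apply]
    rw [mul_assoc, mul_comm (exp _), exp_neg_div_mul_exp_div, mul_one]
  have hmeas := (hmeas_g'.comp_snd (μ := volume.restrict (Iic u)).mul
    (g := fun p : ℝ × ℝ => exp (p.1 / ε)) (by fun_prop)).indicator
      (measurableSet_lt measurable_fst measurable_snd)
  refine (integrable_prod_iff' hmeas).2 ⟨.of_forall fun s => ?_, ?_⟩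
  · exact ((integrableOn_exp_div_Iic hε u).const_mul (g' s)).indicator measurableSet_Iio
  · refine (hg'.norm.const_mul ε).congr ?_
    filter_upwards [ae_restrict_mem measurableSet_Iic] with s hs
    rw [norm_mul, norm_of_nonneg (exp_pos _).le,
      ← setIntegral_indicator_lt_mul_exp hε (fun t => ‖g' t‖) hs]
    refine integral_congr_ae (.of_forall fun t => ?_)
    simp only [norm_indicator_eq_indicator_norm, Pi.mul_apply, norm_mul,
      norm_of_nonneg (exp_pos _).le]

lemma setIntegral_indicator_lt_mul_exp_right
    (hgg' : ∀ x y, x ≤ y → g y - g x = ∫ t in x..y, g' t) {t : ℝ} (ht : t ≤ u) :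
    ∫ s in Iic u, {p : ℝ × ℝ | p.1 < p.2}.indicator (fun p => g' p.2 * exp (p.1 / ε)) (t, s) =
      (g u - g t) * exp (t / ε) := by
  change ∫ s in Iic u, (Ioi t).indicator (fun s => g' s * exp (t / ε)) s = _
  rw [setIntegral_indicator measurableSet_Ioi, inter_comm, Ioi_inter_Iic, integral_mul_const,
    hgg' t u ht, intervalIntegral.integral_of_le ht]

lemma integrableOn_sub_mul_exp (hε : 0 < ε) (hgg' : ∀ x y, x ≤ y → g y - g x = ∫ t in x..y, g' t)
    (hg' : IntegrableOn (fun t => g' t * exp (t / ε)) (Iic u)) :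
    IntegrableOn (fun t => (g u - g t) * exp (t / ε)) (Iic u) :=
  (integrable_indicator_lt_mul_exp hε hg').integral_prod_left.congr <| by
    filter_upwards [ae_restrict_mem measurableSet_Iic] with t ht
    exact setIntegral_indicator_lt_mul_exp_right hgg' ht

lemma setIntegral_sub_mul_exp (hε : 0 < ε) (hgg' : ∀ x y, x ≤ y → g y - g x = ∫ t in x..y, g' t)
    (hg' : IntegrableOn (fun t => g' t * exp (t / ε)) (Iic u)) :
    ∫ t in Iic u, (g u - g t) * exp (t / ε) = ε * ∫ t in Iic u, g' t * exp (t / ε) := by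
  rw [← integral_const_mul]
  calc ∫ t in Iic u, (g u - g t) * exp (t / ε)
      = ∫ t in Iic u, ∫ s in Iic u,
          {p : ℝ × ℝ | p.1 < p.2}.indicator (fun p => g' p.2 * exp (p.1 / ε)) (t, s) :=
        setIntegral_congr_fun measurableSet_Iic fun t ht =>
          (setIntegral_indicator_lt_mul_exp_right hgg' ht).symm
    _ = ∫ s in Iic u, ∫ t in Iic u,
          {p : ℝ × ℝ | p.1 < p.2}.indicator (fun p => g' p.2 * exp (p.1 / ε)) (t, s) :=
        integral_integral_swap (integrable_indicator_lt_mul_exp hε hg')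
    _ = ∫ s in Iic u, ε * (g' s * exp (s / ε)) :=
        setIntegral_congr_fun measurableSet_Iic fun s hs =>
          setIntegral_indicator_lt_mul_exp hε g' hs

lemma integrableOn_mul_exp_of_primitive (hε : 0 < ε)
    (hgg' : ∀ x y, x ≤ y → g y - g x = ∫ t in x..y, g' t)
    (hg' : IntegrableOn (fun t => g' t * exp (t / ε)) (Iic u)) :
    IntegrableOn (fun t => g t * exp (t / ε)) (Iic u) := by
  refine (((integrableOn_exp_div_Iic hε u).const_mul (g u)).sub
    (integrableOn_sub_mul_exp hε hgg' hg')).congr (.of_forall fun t => ?_)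
  simp only [Pi.sub_apply]
  ring

lemma expAvg_add_mul_expAvg_of_primitive (hε : 0 < ε)
    (hgg' : ∀ x y, x ≤ y → g y - g x = ∫ t in x..y, g' t)
    (hg' : IntegrableOn (fun t => g' t * exp (t / ε)) (Iic u)) :
    expAvg ε g u + ε * expAvg ε g' u = g u := by
  have hsub : expAvg ε (fun t => g u - g t) u = ε * expAvg ε g' u := by
    rw [expAvg, setIntegral_sub_mul_exp hε hgg' hg', expAvg, mul_left_comm]
  rw [← hsub, expAvg_sub ((integrableOn_exp_div_Iic hε u).const_mul (g u))
    (integrableOn_mul_exp_of_primitive hε hgg' hg'), expAvg_const hε]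
  ring

lemma hasDerivAt_integral_Iic {h : ℝ → ℝ} (hh : Continuous h) (hInt : ∀ u, IntegrableOn h (Iic u))
    (u : ℝ) : HasDerivAt (fun u => ∫ t in Iic u, h t) (h u) u := by
  have hsplit : (fun u => ∫ t in Iic u, h t) =
      fun u => (∫ t in Iic 0, h t) + ∫ t in (0 : ℝ)..u, h t := by
    funext v
    rw [← intervalIntegral.integral_Iic_sub_Iic (hInt 0) (hInt v), add_sub_cancel]
  rw [hsplit]
  exact (hh.integral_hasStrictDerivAt 0 u).hasDerivAt.const_add _

lemma hasDerivAt_expAvg (hg : Continuous g)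
    (hInt : ∀ u, IntegrableOn (fun t => g t * exp (t / ε)) (Iic u)) (u : ℝ) :
    HasDerivAt (expAvg ε g) (ε⁻¹ * (g u - expAvg ε g u)) u := by
  have hexp : HasDerivAt (fun u => ε⁻¹ * exp (-u / ε)) (ε⁻¹ * (exp (-u / ε) * (-1 / ε))) u :=
    ((hasDerivAt_neg u).div_const ε).exp.const_mul ε⁻¹
  refine (hexp.mul (hasDerivAt_integral_Iic (by fun_prop) hInt u)).congr_deriv ?_
  rw [expAvg]
  linear_combination ε⁻¹ * g u * exp_neg_div_mul_exp_div u ε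

lemma hasDerivAt_expAvg_of_primitive (hε : 0 < ε) (hg : Continuous g)
    (hgg' : ∀ x y, x ≤ y → g y - g x = ∫ t in x..y, g' t)
    (hg' : ∀ u, IntegrableOn (fun t => g' t * exp (t / ε)) (Iic u)) (u : ℝ) :
    HasDerivAt (expAvg ε g) (expAvg ε g' u) u := by
  convert hasDerivAt_expAvg hg (fun u => integrableOn_mul_exp_of_primitive hε hgg' (hg' u)) u
    using 1
  rw [← expAvg_add_mul_expAvg_of_primitive hε hgg' (hg' u), add_sub_cancel_left,
    inv_mul_cancel_left₀ hε.ne']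

lemma continuous_expAvg_of_primitive (hε : 0 < ε) (hg : Continuous g)
    (hgg' : ∀ x y, x ≤ y → g y - g x = ∫ t in x..y, g' t)
    (hg' : ∀ u, IntegrableOn (fun t => g' t * exp (t / ε)) (Iic u)) :
    Continuous (expAvg ε g') := by
  have heq : expAvg ε g' = fun u => ε⁻¹ * (g u - expAvg ε g u) := by
    funext u
    rw [← expAvg_add_mul_expAvg_of_primitive hε hgg' (hg' u), add_sub_cancel_left,
      inv_mul_cancel_left₀ hε.ne']
  have hcont : Continuous (expAvg ε g) := continuous_iff_continuousAt.2 fun u =>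
    (hasDerivAt_expAvg_of_primitive hε hg hgg' hg' u).continuousAt
  rw [heq]
  fun_prop

lemma integrableOn_mul_exp_of_integrable_mul_exp_abs {ε₀ : ℝ} (hε : 0 < ε) (hεε₀ : ε < ε₀)
    (hg : Integrable fun t => g t * exp (-|t| / ε₀)) (u : ℝ) :
    IntegrableOn (fun t => g t * exp (t / ε)) (Iic u) := by
  have hε₀ : 0 < ε₀ := hε.trans hεε₀
  have hweight : ∀ t ∈ Iic u, ‖exp (t / ε + |t| / ε₀)‖ ≤ exp (|u| / ε + |u| / ε₀) := by
    intro t ht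
    rw [norm_of_nonneg (exp_pos _).le, exp_le_exp]
    rcases le_total t 0 with ht0 | ht0
    · have hle : t / ε ≤ t / ε₀ := by
        rw [div_le_div_iff₀ hε hε₀]
        nlinarith
      calc t / ε + |t| / ε₀ ≤ 0 := by
            rw [abs_of_nonpos ht0, neg_div]
            linarith
        _ ≤ _ := by positivity
    · have htu : t ≤ |u| := le_trans ht (le_abs_self u)
      rw [abs_of_nonneg ht0]
      gcongr
  refine (hg.integrableOn.bdd_mul (Continuous.aestronglyMeasurable (by fun_prop))
    ((ae_restrict_mem measurableSet_Iic).mono hweight)).congr (.of_forall fun t => ?_)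
  simp only
  rw [mul_left_comm, ← exp_add]
  congr 2
  ring

end ExpAverages

section UpperBound

/-- The quadratic polynomial in `t` touching `f` at `b` to first order, with second derivative
`m b`. Its average along `φ` is affine in the averages `(x₁, x₂)` of `φ` and `φ ^ 2`, and for
`m = expAvg ε f''` agrees with the asserted Bellman function on the right tangent at `b`. -/
noncomputable def tangentParabola (f f' m : ℝ → ℝ) (b t : ℝ) : ℝ :=
  f b + f' b * (t - b) + m b * (t - b) ^ 2 / 2

/-- The superposition of the shifted quadratics `rampQuad ε (s - t) / 2` with weight `w s`,
`a ≤ s ≤ b`. -/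
noncomputable def rampPotential (ε : ℝ) (w : ℝ → ℝ) (a b t : ℝ) : ℝ :=
  ∫ s in a..b, w s * (rampQuad ε (s - t) / 2)

variable {ε a b t u L : ℝ} {w : ℝ → ℝ}

lemma rampPotential_add_adjacent (hw : Continuous w) (a b c t : ℝ) :
    rampPotential ε w a b t + rampPotential ε w b c t = rampPotential ε w a c t := by
  have hcont : Continuous fun s => w s * (rampQuad ε (s - t) / 2) := by
    have := continuous_rampQuad (ε := ε)
    fun_prop
  exact intervalIntegral.integral_add_adjacent_intervals (hcont.intervalIntegrable _ _)
    (hcont.intervalIntegrable _ _)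

lemma rampPotential_eq_zero (hab : a ≤ b) (hbt : b ≤ t) : rampPotential ε w a b t = 0 := by
  rw [rampPotential, ← intervalIntegral.integral_zero (a := a) (b := b)]
  refine intervalIntegral.integral_congr fun s hs => ?_
  rw [uIcc_of_le hab] at hs
  simp [rampQuad_of_nonpos (sub_nonpos.2 (hs.2.trans hbt))]

lemma rampPotential_nonneg (hw : ∀ s, w s ≤ 0) (hab : a ≤ b) (hbt : b - t ≤ 2 * ε) :
    0 ≤ rampPotential ε w a b t :=
  intervalIntegral.integral_nonneg hab fun s hs =>
    mul_nonneg_of_nonpos_of_nonpos (hw s)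
      (div_nonpos_of_nonpos_of_nonneg (rampQuad_nonpos (by linarith [hs.2])) zero_le_two)

lemma rampPotential_nonpos (hε : 0 ≤ ε) (hw : ∀ s, w s ≤ 0) (hab : a ≤ b) (hat : 2 * ε ≤ a - t) :
    rampPotential ε w a b t ≤ 0 := by
  rw [rampPotential, intervalIntegral.integral_of_le hab]
  exact setIntegral_nonpos measurableSet_Ioc fun s hs =>
    mul_nonpos_of_nonpos_of_nonneg (hw s)
      (div_nonneg (rampQuad_nonneg hε (by linarith [hs.1])) zero_le_two)

variable {f f' m m' : ℝ → ℝ}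

lemma tangentParabola_self (t : ℝ) : tangentParabola f f' m t t = f t := by
  simp [tangentParabola]

lemma tangentParabola_sub (hf : ∀ s, HasDerivAt f (f' s) s)
    (hf' : ∀ s, HasDerivAt f' (m s + ε * m' s) s) (hm : ∀ s, HasDerivAt m (m' s) s)
    (hm' : Continuous m') (a b t : ℝ) :
    tangentParabola f f' m b t - tangentParabola f f' m a t =
      ∫ s in a..b, m' s * (((s - t) ^ 2 - 2 * ε * (s - t)) / 2) := by
  refine (intervalIntegral.integral_eq_sub_of_hasDerivAt
    (f := fun s => tangentParabola f f' m s t) (fun s _ => ?_)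
    (Continuous.intervalIntegrable (by fun_prop) _ _)).symm
  have hsub : HasDerivAt (fun s => t - s) (-1) s := (hasDerivAt_id s).const_sub t
  refine (((hf s).add ((hf' s).mul hsub)).add (((hm s).mul (hsub.pow 2)).div_const 2)).congr_deriv
    ?_
  simp only [Pi.pow_apply, Nat.cast_ofNat]
  ring

lemma rampPotential_eq_tangentParabola_sub (hf : ∀ s, HasDerivAt f (f' s) s)
    (hf' : ∀ s, HasDerivAt f' (m s + ε * m' s) s) (hm : ∀ s, HasDerivAt m (m' s) s)
    (hm' : Continuous m') (hab : a ≤ b) (hta : t ≤ a) :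
    rampPotential ε m' a b t = tangentParabola f f' m b t - tangentParabola f f' m a t := by
  rw [tangentParabola_sub hf hf' hm hm']
  refine intervalIntegral.integral_congr fun s hs => ?_
  rw [uIcc_of_le hab] at hs
  simp only [rampQuad_of_nonneg (sub_nonneg.2 (hta.trans hs.1))]

lemma rampPotential_le_tangentParabola_sub (hε : 0 ≤ ε) (hf : ∀ s, HasDerivAt f (f' s) s)
    (hf' : ∀ s, HasDerivAt f' (m s + ε * m' s) s) (hm : ∀ s, HasDerivAt m (m' s) s)
    (hm' : Continuous m') (hm'0 : ∀ s, m' s ≤ 0) (hLu : L ≤ u) (hLt : L ≤ t) :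
    rampPotential ε m' L u t ≤ tangentParabola f f' m u t - f t := by
  rw [← tangentParabola_self (f := f) (f' := f') (m := m) t]
  rcases le_total t u with htu | hut
  · rw [← rampPotential_add_adjacent hm' L t u, rampPotential_eq_zero hLt le_rfl, zero_add,
      rampPotential_eq_tangentParabola_sub hf hf' hm hm' htu le_rfl]
  · rw [rampPotential_eq_zero hLu hut, ← neg_sub, neg_nonneg, tangentParabola_sub hf hf' hm hm',
      intervalIntegral.integral_of_le hut]
    exact setIntegral_nonpos measurableSet_Ioc fun s hs =>
      mul_nonpos_of_nonpos_of_nonneg (hm'0 s) (by nlinarith [hs.2])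

lemma rampPotential_le_max (hε : 0 ≤ ε) (hf : ∀ s, HasDerivAt f (f' s) s)
    (hf' : ∀ s, HasDerivAt f' (m s + ε * m' s) s) (hm : ∀ s, HasDerivAt m (m' s) s)
    (hm' : Continuous m') (hm'0 : ∀ s, m' s ≤ 0) (hLu : L ≤ u) (t : ℝ) :
    rampPotential ε m' L u t ≤ max (tangentParabola f f' m u t - f t) 0 := by
  rcases le_total L t with hLt | htL
  · exact le_max_of_le_left
      (rampPotential_le_tangentParabola_sub hε hf hf' hm hm' hm'0 hLu hLt)
  rcases le_total (2 * ε) (L - t) with hfar | hnear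
  · exact le_max_of_le_right (rampPotential_nonpos hε hm'0 hLu hfar)
  · refine le_max_of_le_left ?_
    calc rampPotential ε m' L u t ≤ rampPotential ε m' t L t + rampPotential ε m' L u t :=
          le_add_of_nonneg_left (rampPotential_nonneg hm'0 htL hnear)
      _ = tangentParabola f f' m u t - f t := by
          rw [rampPotential_add_adjacent hm',
            rampPotential_eq_tangentParabola_sub hf hf' hm hm' (htL.trans hLu) le_rfl,
            tangentParabola_self]

variable {l r : ℝ} {φ : ℝ → ℝ}

lemma integrable_prod_mul_rampQuad (hw : Continuous w) (hφ : memBMOe ε l r φ) :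
    Integrable (Function.uncurry fun s τ => w s * (rampQuad ε (s - φ τ) / 2))
      ((volume.restrict (Ioc L u)).prod (volume.restrict (Ioo l r))) := by
  have hbound_s : Integrable (fun s => |w s| * (2 * s ^ 2 + ε ^ 2)) (volume.restrict (Ioc L u)) :=
    Continuous.integrableOn_Ioc (by fun_prop)
  have hw_abs : Integrable (fun s => |w s|) (volume.restrict (Ioc L u)) :=
    Continuous.integrableOn_Ioc (by fun_prop)
  have hφ_sq : Integrable (fun τ => 2 * φ τ ^ 2) (volume.restrict (Ioo l r)) := hφ.2.1.const_mul 2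
  refine ((hbound_s.mul_prod (integrable_const (1 : ℝ))).add (hw_abs.mul_prod hφ_sq)).mono' ?_
    (.of_forall fun ⟨s, τ⟩ => ?_)
  · have hramp : AEStronglyMeasurable (fun z : ℝ × ℝ => rampQuad ε (z.1 - φ z.2) / 2)
        ((volume.restrict (Ioc L u)).prod (volume.restrict (Ioo l r))) :=
      (continuous_rampQuad.div_const 2).comp_aestronglyMeasurable
        (continuous_fst.aestronglyMeasurable.sub hφ.1.1.comp_snd)
    exact (hw.comp continuous_fst).aestronglyMeasurable.mul hramp
  · have hramp : |rampQuad ε (s - φ τ) / 2| ≤ (2 * s ^ 2 + ε ^ 2) + 2 * φ τ ^ 2 := by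
      rw [abs_div, abs_two]
      have := abs_rampQuad_le (ε := ε) (y := s - φ τ)
      nlinarith [sq_nonneg (s + φ τ), sq_nonneg ε]
    simp only [Function.uncurry, Pi.add_apply, norm_mul, norm_eq_abs, mul_one]
    rw [← mul_add]
    exact mul_le_mul_of_nonneg_left hramp (abs_nonneg _)

lemma integrableOn_rampPotential (hw : Continuous w) (hφ : memBMOe ε l r φ) (hLu : L ≤ u) :
    IntegrableOn (fun τ => rampPotential ε w L u (φ τ)) (Ioo l r) := by
  simp only [rampPotential, intervalIntegral.integral_of_le hLu]
  exact (integrable_prod_mul_rampQuad hw hφ).integral_prod_right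

lemma memBMOe.const_sub (hφ : memBMOe ε l r φ) (s : ℝ) : memBMOe ε l r fun t => s - φ t := by
  simpa using hφ.comp_lipschitzWith ((LipschitzWith.const s).sub LipschitzWith.id)

lemma memBMOe.setIntegral_rampQuad_const_sub_nonpos (hφ : memBMOe ε l r φ) (hε : 0 ≤ ε)
    (hlr : l < r) {s : ℝ} (hs : s - ε ≤ intAvg φ l r) :
    ∫ τ in Ioo l r, rampQuad ε (s - φ τ) ≤ 0 := by
  rw [← integral_Ioc_eq_integral_Ioo, ← intervalIntegral.integral_of_le hlr.le]
  refine (hφ.const_sub s).integral_rampQuad_nonpos hε hlr.le ?_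
  have hmean : (s - ε) * (r - l) ≤ ∫ τ in l..r, φ τ := (le_div_iff₀ (sub_pos.2 hlr)).1 hs
  calc ∫ τ in l..r, (s - φ τ - ε) = ∫ τ in l..r, ((s - ε) - φ τ) := by simp only [sub_right_comm]
    _ = (s - ε) * (r - l) - ∫ τ in l..r, φ τ := by
        rw [intervalIntegral.integral_sub intervalIntegrable_const
          (hφ.intervalIntegrable hlr.le), intervalIntegral.integral_const, smul_eq_mul, mul_comm]
    _ ≤ 0 := sub_nonpos.2 hmean

lemma setIntegral_rampPotential_nonneg (hε : 0 ≤ ε) (hw : Continuous w) (hw0 : ∀ s, w s ≤ 0)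
    (hlr : l < r) (hφ : memBMOe ε l r φ) (hLu : L ≤ u) (hu : u - ε ≤ intAvg φ l r) :
    0 ≤ ∫ τ in Ioo l r, rampPotential ε w L u (φ τ) := by
  simp only [rampPotential, intervalIntegral.integral_of_le hLu]
  rw [← integral_integral_swap (integrable_prod_mul_rampQuad hw hφ)]
  refine setIntegral_nonneg measurableSet_Ioc fun s hs => ?_
  rw [integral_const_mul, integral_div]
  exact mul_nonneg_of_nonpos_of_nonpos (hw0 s) (div_nonpos_of_nonpos_of_nonneg
    (hφ.setIntegral_rampQuad_const_sub_nonpos hε hlr (by linarith [hs.2])) zero_le_two)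

-- `max F (G n)` is dominated by `|F|`, while `G n` itself need not be.
lemma integral_nonneg_of_eventually_le {α : Type*} [MeasurableSpace α] {μ : Measure α}
    {F : α → ℝ} {G : ℕ → α → ℝ} (hF : Integrable F μ) (hG : ∀ n, Integrable (G n) μ)
    (hG0 : ∀ n, 0 ≤ ∫ x, G n x ∂μ) (hGF : ∀ n x, G n x ≤ max (F x) 0)
    (hev : ∀ x, ∀ᶠ n in Filter.atTop, G n x ≤ F x) : 0 ≤ ∫ x, F x ∂μ := by
  have hbound : ∀ n x, ‖max (F x) (G n x)‖ ≤ ‖F x‖ := fun n x =>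
    abs_le.2 ⟨(neg_abs_le _).trans (le_max_left _ _),
      max_le (le_abs_self _) ((hGF n x).trans (max_le (le_abs_self _) (abs_nonneg _)))⟩
  have hlim : Filter.Tendsto (fun n => ∫ x, max (F x) (G n x) ∂μ) Filter.atTop
      (nhds (∫ x, F x ∂μ)) :=
    tendsto_integral_of_dominated_convergence _ (fun n => (hF.sup (hG n)).1) hF.norm
      (fun n => .of_forall (hbound n)) (.of_forall fun x => tendsto_const_nhds.congr'
        ((hev x).mono fun n hn => (max_eq_left hn).symm))
  refine ge_of_tendsto' hlim fun n => (hG0 n).trans ?_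
  exact integral_mono (hG n) (hF.sup (hG n)) fun x => le_max_right _ _

lemma tangentParabola_eq_quadratic (f f' m : ℝ → ℝ) (u t : ℝ) :
    tangentParabola f f' m u t =
      (f u - f' u * u + m u / 2 * u ^ 2) + (f' u - m u * u) * t + m u / 2 * t ^ 2 := by
  rw [tangentParabola]
  ring

lemma memBMOe.intAvg_tangentParabola (hφ : memBMOe ε l r φ) (hlr : l < r) (f f' m : ℝ → ℝ)
    (u : ℝ) :
    intAvg (fun τ => tangentParabola f f' m u (φ τ)) l r =
      f u + f' u * (intAvg φ l r - u) +
        m u / 2 * (intAvg (fun τ => φ τ ^ 2) l r - 2 * u * intAvg φ l r + u ^ 2) := by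
  simp only [tangentParabola_eq_quadratic]
  rw [intAvg_quadratic hlr hφ.memLp_two]
  ring

lemma memBMOe.integrableOn_tangentParabola (hφ : memBMOe ε l r φ) (f f' m : ℝ → ℝ) (u : ℝ) :
    IntegrableOn (fun τ => tangentParabola f f' m u (φ τ)) (Ioo l r) := by
  simp only [tangentParabola_eq_quadratic]
  exact ((integrable_const _).add (hφ.1.const_mul _)).add (hφ.2.1.const_mul _)

theorem memBMOe.intAvg_comp_le_intAvg_tangentParabola (hφ : memBMOe ε l r φ) (hε : 0 ≤ ε)
    (hlr : l < r) (hf : ∀ s, HasDerivAt f (f' s) s)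
    (hf' : ∀ s, HasDerivAt f' (m s + ε * m' s) s) (hm : ∀ s, HasDerivAt m (m' s) s)
    (hm' : Continuous m') (hm'0 : ∀ s, m' s ≤ 0)
    (hfφ : IntegrableOn (fun τ => f (φ τ)) (Ioo l r)) (hu : u - ε ≤ intAvg φ l r) :
    intAvg (fun τ => f (φ τ)) l r ≤ intAvg (fun τ => tangentParabola f f' m u (φ τ)) l r := by
  have hq := hφ.integrableOn_tangentParabola f f' m u
  have hLu : ∀ n : ℕ, u - n ≤ u := fun n => sub_le_self _ n.cast_nonneg
  have hdiff : 0 ≤ ∫ τ in Ioo l r, (tangentParabola f f' m u (φ τ) - f (φ τ)) := by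
    refine integral_nonneg_of_eventually_le (hq.sub hfφ)
      (fun n => integrableOn_rampPotential hm' hφ (hLu n))
      (fun n => setIntegral_rampPotential_nonneg hε hm' hm'0 hlr hφ (hLu n) hu)
      (fun n τ => rampPotential_le_max hε hf hf' hm hm' hm'0 (hLu n) (φ τ)) fun τ => ?_
    obtain ⟨N, hN⟩ := exists_nat_ge (u - φ τ)
    filter_upwards [Filter.eventually_ge_atTop N] with n hn
    have hNn : (N : ℝ) ≤ n := Nat.cast_le.2 hn
    exact rampPotential_le_tangentParabola_sub hε hf hf' hm hm' hm'0 (hLu n) (by linarith)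
  rw [integral_sub hq hfφ, sub_nonneg] at hdiff
  simp only [intAvg, intervalIntegral.integral_of_le hlr.le, integral_Ioc_eq_integral_Ioo]
  exact div_le_div_of_nonneg_right hdiff (sub_nonneg.2 hlr.le)

end UpperBound

section Logarithm

variable {c d l r : ℝ}

lemma continuousOn_mul_log_sq : ContinuousOn (fun t => t * log t ^ 2) (Ici 0) := by
  have hcont : Continuous fun t => 4 * (√t * log √t) ^ 2 :=
    continuous_const.mul ((continuous_mul_log.comp continuous_sqrt).pow 2)
  refine hcont.continuousOn.congr fun t ht => ?_
  simp only [log_sqrt ht, mul_pow, sq_sqrt ht]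
  ring

lemma continuousOn_primitive_log_sq :
    ContinuousOn (fun t => t * log t ^ 2 - 2 * (t * log t) + 2 * t) (Ici 0) :=
  (continuousOn_mul_log_sq.sub (continuous_const.mul continuous_mul_log).continuousOn).add
    (by fun_prop)

lemma hasDerivAt_primitive_log_sq {t : ℝ} (ht : t ≠ 0) :
    HasDerivAt (fun t => t * log t ^ 2 - 2 * (t * log t) + 2 * t) (log t ^ 2) t := by
  have hlog := hasDerivAt_log ht
  refine ((((hasDerivAt_id t).mul (hlog.pow 2)).sub
    (((hasDerivAt_id t).mul hlog).const_mul 2)).add ((hasDerivAt_id t).const_mul 2)).congr_deriv ?_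
  simp only [id]
  field_simp
  simp only [Pi.pow_apply, Nat.cast_ofNat]
  ring

lemma intervalIntegrable_log_sq (hc : 0 ≤ c) (hcd : c ≤ d) :
    IntervalIntegrable (fun t => log t ^ 2) volume c d := by
  rw [intervalIntegrable_iff_integrableOn_Ioc_of_le hcd]
  exact intervalIntegral.integrableOn_deriv_of_nonneg
    (continuousOn_primitive_log_sq.mono fun _ ht => hc.trans ht.1)
    (fun _ ht => hasDerivAt_primitive_log_sq (hc.trans_lt ht.1).ne') fun _ _ => sq_nonneg _

lemma integral_log_sq (hc : 0 ≤ c) (hcd : c ≤ d) :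
    ∫ t in c..d, log t ^ 2 = (d * log d ^ 2 - 2 * (d * log d) + 2 * d) -
      (c * log c ^ 2 - 2 * (c * log c) + 2 * c) :=
  intervalIntegral.integral_eq_sub_of_hasDerivAt_of_le hcd
    (continuousOn_primitive_log_sq.mono fun _ ht => hc.trans ht.1)
    (fun _ ht => hasDerivAt_primitive_log_sq (hc.trans_lt ht.1).ne')
    (intervalIntegrable_log_sq hc hcd)

-- For `c = 0` the convention `log 0 = 0` is harmless: every `log c` carries a factor `c`.
lemma variance_log (hc : 0 ≤ c) (hcd : c < d) :
    intAvg (fun t => log t ^ 2) c d - intAvg log c d ^ 2 =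
      1 - c * d * ((log d - log c) / (d - c)) ^ 2 := by
  have hlen : d - c ≠ 0 := sub_ne_zero.2 hcd.ne'
  rw [intAvg, intAvg, integral_log_sq hc hcd.le, integral_log]
  field_simp
  ring

lemma memBMOe_one_log (hl : 0 ≤ l) (hlr : l ≤ r) : memBMOe 1 l r log := by
  refine ⟨(intervalIntegrable_iff_integrableOn_Ioo_of_le hlr).1
      intervalIntegral.intervalIntegrable_log',
    (intervalIntegrable_iff_integrableOn_Ioo_of_le hlr).1 (intervalIntegrable_log_sq hl hlr),
    fun c d hc hcd _ => ?_⟩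
  have hc0 : 0 ≤ c := hl.trans hc
  have hd0 : 0 ≤ d := hc0.trans hcd.le
  rw [variance_log hc0 hcd, one_pow]
  exact sub_le_self _ (by positivity)

end Logarithm

section Extremal

/-- The extremal function on `(0, 1)`: equal to `u` on `[a, 1)`, with a logarithmic tail of slope
`ε` on `(0, a]`. -/
noncomputable def truncLog (ε a u t : ℝ) : ℝ := u + ε * min (log t - log a) 0

variable {ε a u : ℝ}

lemma memBMOe_truncLog (hε : 0 ≤ ε) (a u : ℝ) : memBMOe ε 0 1 (truncLog ε a u) := by
  have hmin : LipschitzWith 1 fun y => min (y - log a) 0 := by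
    simpa using (LipschitzWith.id.sub (LipschitzWith.const (log a))).min_const 0
  have hlip : LipschitzWith ‖ε‖₊ fun y => u + ε * min (y - log a) 0 := by
    simpa using (LipschitzWith.const u).add ((lipschitzWith_smul ε).comp hmin)
  have h := (memBMOe_one_log le_rfl zero_le_one).comp_lipschitzWith hlip
  rwa [coe_nnnorm, norm_of_nonneg hε, mul_one] at h

lemma truncLog_of_le {t : ℝ} (ha : 0 < a) (hat : a ≤ t) : truncLog ε a u t = u := by
  rw [truncLog, min_eq_right (sub_nonneg.2 (log_le_log ha hat)), mul_zero, add_zero]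

lemma truncLog_mul_exp {s : ℝ} (hε : 0 < ε) (ha : 0 < a) (hs : s ≤ u) :
    truncLog ε a u (a * exp ((s - u) / ε)) = s := by
  rw [truncLog, log_mul ha.ne' (exp_ne_zero _), log_exp, add_sub_cancel_left,
    min_eq_left (div_nonpos_of_nonpos_of_nonneg (sub_nonpos.2 hs) hε.le),
    mul_div_cancel₀ _ hε.ne', add_sub_cancel]

lemma image_mul_exp_Iic (hε : 0 < ε) (ha : 0 < a) (u : ℝ) :
    (fun s => a * exp ((s - u) / ε)) '' Iic u = Ioc 0 a := by
  ext t
  constructor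
  · rintro ⟨s, hs, rfl⟩
    have hle : exp ((s - u) / ε) ≤ 1 :=
      exp_le_one_iff.2 (div_nonpos_of_nonpos_of_nonneg (sub_nonpos.2 hs) hε.le)
    exact ⟨by positivity, mul_le_of_le_one_right ha.le hle⟩
  · rintro ⟨ht0, hta⟩
    have hlog : log (t / a) ≤ 0 := log_nonpos (by positivity) ((div_le_one ha).2 hta)
    refine ⟨u + ε * log (t / a), ?_, ?_⟩
    · exact add_le_of_nonpos_right (mul_nonpos_of_nonneg_of_nonpos hε.le hlog)
    · simp only
      rw [add_sub_cancel_left, mul_div_cancel_left₀ _ hε.ne', exp_log (by positivity),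
        mul_div_cancel₀ _ ha.ne']

variable {g : ℝ → ℝ}

lemma hasDerivAt_mul_exp (ε a u s : ℝ) :
    HasDerivAt (fun s => a * exp ((s - u) / ε)) (a * (exp ((s - u) / ε) * (1 / ε))) s :=
  (((hasDerivAt_id s).sub_const u).div_const ε).exp.const_mul a

lemma monotone_mul_exp (hε : 0 ≤ ε) (ha : 0 ≤ a) (u : ℝ) :
    Monotone fun s => a * exp ((s - u) / ε) := fun s t hst => by
  dsimp only
  gcongr

lemma deriv_smul_comp_truncLog {s : ℝ} (hε : 0 < ε) (ha : 0 < a) (hs : s ∈ Iic u) :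
    (a * (exp ((s - u) / ε) * (1 / ε))) • g (truncLog ε a u (a * exp ((s - u) / ε))) =
      a * (ε⁻¹ * exp (-u / ε)) * (g s * exp (s / ε)) := by
  have hexp : exp ((s - u) / ε) = exp (-u / ε) * exp (s / ε) := by
    rw [← exp_add]
    congr 1
    ring
  rw [truncLog_mul_exp hε ha hs, smul_eq_mul, hexp]
  ring

lemma integrableOn_comp_truncLog_Ioc (hε : 0 < ε) (ha : 0 < a)
    (hg : IntegrableOn (fun t => g t * exp (t / ε)) (Iic u)) :
    IntegrableOn (fun t => g (truncLog ε a u t)) (Ioc 0 a) := by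
  rw [← image_mul_exp_Iic hε ha u,
    integrableOn_image_iff_integrableOn_deriv_smul_of_monotoneOn measurableSet_Iic
      (fun s _ => (hasDerivAt_mul_exp ε a u s).hasDerivWithinAt)
      ((monotone_mul_exp hε.le ha.le u).monotoneOn _)]
  exact IntegrableOn.congr_fun (hg.const_mul (a * (ε⁻¹ * exp (-u / ε))))
    (fun s hs => (deriv_smul_comp_truncLog hε ha hs).symm) measurableSet_Iic

lemma setIntegral_comp_truncLog_Ioc (hε : 0 < ε) (ha : 0 < a) (g : ℝ → ℝ) :
    ∫ t in Ioc 0 a, g (truncLog ε a u t) = a * expAvg ε g u := by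
  rw [← image_mul_exp_Iic hε ha u,
    integral_image_eq_integral_deriv_smul_of_monotoneOn measurableSet_Iic
      (fun s _ => (hasDerivAt_mul_exp ε a u s).hasDerivWithinAt)
      ((monotone_mul_exp hε.le ha.le u).monotoneOn _),
    setIntegral_congr_fun measurableSet_Iic fun s hs => deriv_smul_comp_truncLog hε ha hs,
    integral_const_mul, mul_assoc, expAvg]

lemma intervalIntegrable_comp_truncLog_right (ha : 0 < a) (ha1 : a ≤ 1) :
    IntervalIntegrable (fun t => g (truncLog ε a u t)) volume a 1 := by
  refine (intervalIntegrable_const (c := g u)).congr fun t ht => ?_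
  rw [uIoc_of_le ha1] at ht
  rw [truncLog_of_le ha ht.1.le]

lemma integral_comp_truncLog_right (ha : 0 < a) (ha1 : a ≤ 1) :
    ∫ t in a..1, g (truncLog ε a u t) = (1 - a) * g u := by
  rw [← smul_eq_mul, ← intervalIntegral.integral_const]
  refine intervalIntegral.integral_congr fun t ht => ?_
  rw [uIcc_of_le ha1] at ht
  simp only [truncLog_of_le ha ht.1]

lemma intAvg_comp_truncLog (hε : 0 < ε) (ha : 0 < a) (ha1 : a ≤ 1)
    (hg : IntegrableOn (fun t => g t * exp (t / ε)) (Iic u)) :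
    IntegrableOn (fun t => g (truncLog ε a u t)) (Ioo 0 1) ∧
      intAvg (fun t => g (truncLog ε a u t)) 0 1 = a * expAvg ε g u + (1 - a) * g u := by
  have hleft : IntervalIntegrable (fun t => g (truncLog ε a u t)) volume 0 a :=
    (intervalIntegrable_iff_integrableOn_Ioc_of_le ha.le).2
      (integrableOn_comp_truncLog_Ioc hε ha hg)
  have hright : IntervalIntegrable (fun t => g (truncLog ε a u t)) volume a 1 :=
    intervalIntegrable_comp_truncLog_right ha ha1
  refine ⟨(intervalIntegrable_iff_integrableOn_Ioo_of_le zero_le_one).1 (hleft.trans hright), ?_⟩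
  rw [intAvg, sub_zero, div_one, ← intervalIntegral.integral_add_adjacent_intervals hleft hright,
    intervalIntegral.integral_of_le ha.le, setIntegral_comp_truncLog_Ioc hε ha,
    integral_comp_truncLog_right ha ha1]

lemma intAvg_const {c d : ℝ} (hcd : c < d) (k : ℝ) : intAvg (fun _ => k) c d = k := by
  rw [intAvg, intervalIntegral.integral_const, smul_eq_mul,
    mul_div_cancel_left₀ _ (sub_ne_zero.2 hcd.ne')]

lemma memBMOe_const (ε l r k : ℝ) : memBMOe ε l r fun _ => k := by
  refine ⟨integrable_const _, integrable_const _, fun c d _ hcd _ => ?_⟩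
  rw [intAvg_const hcd, intAvg_const hcd, sub_self]
  positivity

lemma exists_memBMOe_intAvg_comp_eq (hε : 0 < ε) (ha : a ∈ Icc 0 1) (u : ℝ) :
    ∃ φ, memBMOe ε 0 1 φ ∧ ∀ g g' : ℝ → ℝ, (∀ x y, x ≤ y → g y - g x = ∫ t in x..y, g' t) →
      IntegrableOn (fun t => g' t * exp (t / ε)) (Iic u) →
      IntegrableOn (fun t => g (φ t)) (Ioo 0 1) ∧
        intAvg (fun t => g (φ t)) 0 1 = g u - a * ε * expAvg ε g' u := by
  rcases ha.1.eq_or_lt with rfl | ha0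
  · exact ⟨fun _ => u, memBMOe_const ε 0 1 u, fun g g' _ _ =>
      ⟨integrable_const _, by rw [intAvg_const zero_lt_one]; ring⟩⟩
  · refine ⟨truncLog ε a u, memBMOe_truncLog hε.le a u, fun g g' hgg' hg' => ?_⟩
    obtain ⟨hInt, havg⟩ := intAvg_comp_truncLog hε ha0 ha.2
      (integrableOn_mul_exp_of_primitive hε hgg' hg')
    refine ⟨hInt, havg.trans ?_⟩
    linear_combination a * expAvg_add_mul_expAvg_of_primitive hε hgg' hg'

end Extremal

section RightTangent

variable {ε : ℝ} {x : ℝ × ℝ}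

lemma uRpt_mem_Icc (hε : 0 ≤ ε) (hx : x ∈ parabStrip ε) : uRpt ε x ∈ Icc x.1 (x.1 + ε) := by
  have hsqrt : √(ε ^ 2 - (x.2 - x.1 ^ 2)) ≤ ε := (sqrt_le_left hε).2 (by linarith [hx.1])
  exact ⟨by rw [uRpt]; linarith, sub_le_self _ (sqrt_nonneg _)⟩

lemma snd_eq_of_mem_parabStrip (hx : x ∈ parabStrip ε) :
    x.2 = uRpt ε x ^ 2 - 2 * (uRpt ε x - ε) * (uRpt ε x - x.1) := by
  have hsq : √(ε ^ 2 - (x.2 - x.1 ^ 2)) ^ 2 = ε ^ 2 - (x.2 - x.1 ^ 2) :=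
    sq_sqrt (by linarith [hx.2])
  rw [uRpt]
  linear_combination hsq

end RightTangent

section Bellman

variable {ε : ℝ} {f f3 : ℝ → ℝ}

lemma sub_eq_integral_deriv {g : ℝ → ℝ} (hg : ContDiff ℝ 1 g) (x y : ℝ) :
    g y - g x = ∫ t in x..y, deriv g t :=
  (intervalIntegral.integral_deriv_eq_sub (fun t _ => hg.differentiable one_ne_zero t)
    ((hg.continuous_deriv le_rfl).intervalIntegrable x y)).symm

lemma contDiff_one_deriv (hf : ContDiff ℝ 2 f) : ContDiff ℝ 1 (deriv f) :=
  ((contDiff_succ_iff_deriv (n := 1)).1 hf).2.2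

lemma expAvg_two_mul (hε : 0 < ε) (u : ℝ) : expAvg ε (fun t => 2 * t) u = 2 * (u - ε) := by
  have h := expAvg_add_mul_expAvg_of_primitive (g := fun t => 2 * t) (g' := fun _ => 2) hε
    (fun x y _ => by rw [intervalIntegral.integral_const, smul_eq_mul]; ring)
    ((integrableOn_exp_div_Iic hε u).const_mul 2)
  rw [expAvg_const hε] at h
  linear_combination h

lemma integrableOn_two_mul_mul_exp (hε : 0 < ε) (u : ℝ) :
    IntegrableOn (fun t => 2 * t * exp (t / ε)) (Iic u) :=
  integrableOn_mul_exp_of_primitive (g := fun t => 2 * t) (g' := fun _ => 2) hε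
    (fun x y _ => by rw [intervalIntegral.integral_const, smul_eq_mul]; ring)
    ((integrableOn_exp_div_Iic hε u).const_mul 2)

lemma exists_extremal (hε : 0 < ε) (hf : ContDiff ℝ 1 f)
    (hf'_int : ∀ u, IntegrableOn (fun t => deriv f t * exp (t / ε)) (Iic u)) {x : ℝ × ℝ}
    (hx : x ∈ parabStrip ε) :
    ∃ φ, memBMOe ε 0 1 φ ∧ IntegrableOn (fun t => f (φ t)) (Ioo 0 1) ∧ intAvg φ 0 1 = x.1 ∧
      intAvg (fun t => φ t ^ 2) 0 1 = x.2 ∧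
      expAvg ε (deriv f) (uRpt ε x) * (x.1 - uRpt ε x) + f (uRpt ε x) =
        intAvg (fun t => f (φ t)) 0 1 := by
  obtain ⟨hxu, hux⟩ := uRpt_mem_Icc hε.le hx
  have hx₂ := snd_eq_of_mem_parabStrip hx
  set u := uRpt ε x
  have ha : (u - x.1) / ε ∈ Icc 0 1 :=
    ⟨div_nonneg (sub_nonneg.2 hxu) hε.le, (div_le_one hε).2 (by linarith)⟩
  obtain ⟨φ, hφ, havg⟩ := exists_memBMOe_intAvg_comp_eq hε ha u
  rw [div_mul_cancel₀ _ hε.ne'] at havg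
  obtain ⟨hfφ, hfavg⟩ := havg f (deriv f) (fun x y _ => sub_eq_integral_deriv hf x y) (hf'_int u)
  have hmean := (havg (fun t => t) (fun _ => 1) (fun x y _ => by simp)
    ((integrableOn_exp_div_Iic hε u).const_mul 1)).2
  have hsq := (havg (fun t => t ^ 2) (fun t => 2 * t)
    (fun x y _ => by rw [intervalIntegral.integral_const_mul, integral_id]; ring)
    (integrableOn_two_mul_mul_exp hε u)).2
  rw [expAvg_const hε] at hmean
  rw [expAvg_two_mul hε] at hsq
  refine ⟨φ, hφ, hfφ, hmean.trans (by ring), ?_, ?_⟩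
  · rw [hsq, hx₂]
    ring
  · rw [hfavg]
    ring

lemma memBMOe.intAvg_comp_le (hε : 0 < ε) (hf : ContDiff ℝ 2 f)
    (hf3 : ∀ x y, x ≤ y → deriv (deriv f) y - deriv (deriv f) x = ∫ t in x..y, f3 t)
    (hf3_int : ∀ u, IntegrableOn (fun t => f3 t * exp (t / ε)) (Iic u))
    (hneg : ∀ u, ∫ t in Iic u, f3 t * exp (t / ε) ≤ 0) {x : ℝ × ℝ} (hx : x ∈ parabStrip ε)
    {φ : ℝ → ℝ} (hφ : memBMOe ε 0 1 φ) (hfφ : IntegrableOn (fun t => f (φ t)) (Ioo 0 1))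
    (hx₁ : intAvg φ 0 1 = x.1) (hx₂ : intAvg (fun t => φ t ^ 2) 0 1 = x.2) :
    intAvg (fun t => f (φ t)) 0 1 ≤
      expAvg ε (deriv f) (uRpt ε x) * (x.1 - uRpt ε x) + f (uRpt ε x) := by
  have hf' : ContDiff ℝ 1 (deriv f) := contDiff_one_deriv hf
  have hf'' : Continuous (deriv (deriv f)) := hf'.continuous_deriv le_rfl
  have hf_deriv : ∀ s, HasDerivAt f (deriv f s) s := fun s =>
    (hf.differentiable two_ne_zero s).hasDerivAt
  have hf'_deriv : ∀ s, HasDerivAt (deriv f)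
      (expAvg ε (deriv (deriv f)) s + ε * expAvg ε f3 s) s := fun s => by
    rw [expAvg_add_mul_expAvg_of_primitive hε hf3 (hf3_int s)]
    exact (hf'.differentiable one_ne_zero s).hasDerivAt
  have hnonpos : ∀ s, expAvg ε f3 s ≤ 0 := fun s =>
    mul_nonpos_of_nonneg_of_nonpos (by positivity) (hneg s)
  have hux : uRpt ε x - ε ≤ intAvg φ 0 1 := by
    linarith [(uRpt_mem_Icc hε.le hx).2]
  have hf'u := expAvg_add_mul_expAvg_of_primitive (u := uRpt ε x) hε
    (fun x y _ => sub_eq_integral_deriv hf' x y)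
    (integrableOn_mul_exp_of_primitive hε hf3 (hf3_int _))
  refine (hφ.intAvg_comp_le_intAvg_tangentParabola hε.le zero_lt_one hf_deriv hf'_deriv
    (hasDerivAt_expAvg_of_primitive hε hf'' hf3 hf3_int)
    (continuous_expAvg_of_primitive hε hf'' hf3 hf3_int) hnonpos hfφ hux).trans_eq ?_
  rw [hφ.intAvg_tangentParabola zero_lt_one, hx₁, hx₂, snd_eq_of_mem_parabStrip hx, ← hf'u]
  ring

theorem stmt9_general (hε : 0 < ε) (hf : ContDiff ℝ 2 f)
    (hf3 : ∀ x y, x ≤ y → deriv (deriv f) y - deriv (deriv f) x = ∫ t in x..y, f3 t)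
    (hf3_int : ∀ u, IntegrableOn (fun t => f3 t * exp (t / ε)) (Iic u))
    (hneg : ∀ u, ∫ t in Iic u, f3 t * exp (t / ε) ≤ 0) {x : ℝ × ℝ} (hx : x ∈ parabStrip ε) :
    bellmanFn ε f x.1 x.2 =
      expAvg ε (deriv f) (uRpt ε x) * (x.1 - uRpt ε x) + f (uRpt ε x) := by
  have hf'_int : ∀ u, IntegrableOn (fun t => deriv f t * exp (t / ε)) (Iic u) := fun u =>
    integrableOn_mul_exp_of_primitive hε
      (fun x y _ => sub_eq_integral_deriv (contDiff_one_deriv hf) x y)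
      (integrableOn_mul_exp_of_primitive hε hf3 (hf3_int u))
  refine IsGreatest.csSup_eq ⟨exists_extremal hε (hf.of_le one_le_two) hf'_int hx, ?_⟩
  rintro _ ⟨φ, hφ, hfφ, hx₁, hx₂, rfl⟩
  exact hφ.intAvg_comp_le hε hf hf3 hf3_int hneg hx hfφ hx₁ hx₂

end Bellman

theorem stmt9 (ε ε₀ : ℝ) (hε : 0 < ε) (hεε₀ : ε < ε₀) (f f3 : ℝ → ℝ)
    (hf : memWcl ε₀ f f3)
    (hneg : ∀ u : ℝ, (∫ t in Iic u, f3 t * Real.exp (t / ε)) ≤ 0) :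
    ∀ x ∈ parabStrip ε,
      bellmanFn ε f x.1 x.2 =
        (ε⁻¹ * Real.exp (-(uRpt ε x) / ε) *
            ∫ t in Iic (uRpt ε x), deriv f t * Real.exp (t / ε)) *
          (x.1 - uRpt ε x) + f (uRpt ε x) := by
  obtain ⟨hC2, hf3, -, -, -, hf3_int⟩ := hf
  exact fun x hx => stmt9_general hε hC2 hf3
    (integrableOn_mul_exp_of_integrable_mul_exp_abs hε hεε₀ hf3_int) hneg hx
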